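/- Let d ≥ 3 be an integer and α = d/2 − 1, let C_n^{(α)} be the Gegenbauer polynomials and A_{k,i} the cosine-power expansion coefficients. Let u ∈ [−1, 1], let t ≥ 0, and let (c_n) be a sequence of real numbers with Σ_{n=0}^∞ |c_n| · (t² + 2t)^n < ∞. Then the family f(n, i, k) = c_n · binom(n, i) · t^{2(n−i)} · (−2t)^i · A_{k,i} · C_k^{(α)}(u), indexed by {(n, i, k) ∈ ℕ³ : k ≤ i ≤ n}, is absolutely summable, and Σ_{(n,i,k)} |f(n,i,k)| ≤ Σ_{n=0}^∞ |c_n| · (t² + 2t)^n. -/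

import Mathlib

/-!
The estimate rests on two facts about `α > 0`.

* `|C_k(u)| ≤ C_k(1)` for `u ∈ [-1, 1]`.  Write `u = (z + w) / 2` with `w = z̄` and `|z| = 1`.
  The generating function `(1 - 2us + s²)^{-α}` factors as `(1 - zs)^{-α} (1 - ws)^{-α}`, so
  `C_k(u) = ∑_{a + b = k} p_a p_b z^a w^b` with `p_a = (α)_a / a! ≥ 0`
  (`gegenbauer_eq_coeff`); the triangle inequality bounds this by its value at `z = w = 1`.
* `∑_k A_{k,i} C_k(1) = 1` (`sum_Acoef_mul_gegenbauer_one`), which is the expansion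
  `x^i = ∑_k A_{k,i} C_k(x)` at `x = 1`, by induction on `i` from the three-term recurrence.

As `A_{k,i} ≥ 0`, these give `∑_k |A_{k,i} C_k(u)| ≤ 1`, and the binomial theorem then bounds the
terms with a fixed `n` by `|c_n| (t² + 2t)^n`.  The summand vanishes off `k ≤ i ≤ n`, so any finite
partial sum is dominated by one over a cube `{0, …, N-1}³`.
-/

/-- The Gegenbauer (ultraspherical) polynomials `C_n^{(α)}`, defined by the
recurrence `C_0 = 1`, `C_1(x) = 2αx`,
`n·C_n(x) = 2x(n+α−1)·C_{n−1}(x) − (n+2α−2)·C_{n−2}(x)`. -/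
noncomputable def gegenbauer (α : ℝ) : ℕ → ℝ → ℝ
  | 0, _ => 1
  | 1, x => 2 * α * x
  | (n + 2), x =>
      (2 * x * ((n : ℝ) + 1 + α) * gegenbauer α (n + 1) x
        - ((n : ℝ) + 2 * α) * gegenbauer α n x) / ((n : ℝ) + 2)

/-- The rising factorial `(α)_m = α(α+1)⋯(α+m−1)`. -/
noncomputable def risingFac (α : ℝ) : ℕ → ℝ
  | 0 => 1
  | (n + 1) => risingFac α n * (α + n)

/-- The cosine-power expansion coefficients `A_{k,i}` in dimension `d` (with
`α = d/2 − 1`): `A_{k,i} = i!(α+k)/(2^i ((i−k)/2)! (α)_{(i+k)/2+1})` when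
`k ≤ i` and `k ≡ i (mod 2)`, and `0` otherwise. -/
noncomputable def Acoef (d : ℕ) (k i : ℕ) : ℝ :=
  if k ≤ i ∧ k % 2 = i % 2 then
    (Nat.factorial i : ℝ) * (((d : ℝ) / 2 - 1) + k) /
      (2 ^ i * (Nat.factorial ((i - k) / 2) : ℝ) *
        risingFac ((d : ℝ) / 2 - 1) ((i + k) / 2 + 1))
  else 0

open Finset PowerSeries

lemma risingFac_pos {α : ℝ} (hα : 0 < α) (n : ℕ) : 0 < risingFac α n := by
  induction n with
  | zero => simp [risingFac]
  | succ n ih => rw [risingFac]; positivity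

/-! ### The bound `|C_k(u)| ≤ C_k(1)` -/

/-- The power series `(1 - zX)^{-α} = ∑ (α)_a / a! z^a X^a`. -/
noncomputable def binomSeries (α : ℝ) (z : ℂ) : PowerSeries ℂ :=
  PowerSeries.mk fun a => ((risingFac α a / a.factorial : ℝ) : ℂ) * z ^ a

/-- The differential equation characterising `(1 - zX)^{-α}`. -/
lemma binomSeries_deriv (α : ℝ) (z : ℂ) :
    (1 - C z * X) * d⁄dX ℂ (binomSeries α z) = C (α * z) * binomSeries α z := by
  have key : ∀ a : ℕ, ((risingFac α (a + 1) / (a + 1).factorial : ℝ) : ℂ) * (a + 1)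
      = (α + a) * ((risingFac α a / a.factorial : ℝ) : ℂ) := by
    intro a
    have h : risingFac α (a + 1) / (a + 1).factorial * (a + 1)
      = (α + a) * (risingFac α a / a.factorial) := by
      rw [risingFac, Nat.factorial_succ]
      push_cast
      field_simp
    exact_mod_cast congrArg (fun r : ℝ => (r : ℂ)) h
  ext n
  rw [sub_mul, one_mul, mul_assoc, map_sub, coeff_C_mul, coeff_C_mul]
  cases n with
  | zero =>
    have := key 0
    simp only [coeff_derivative, binomSeries, coeff_mk, coeff_zero_X_mul]
    push_cast at this ⊢
    linear_combination z * this
  | succ n =>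
    have := key (n + 1)
    simp only [coeff_derivative, binomSeries, coeff_mk, coeff_succ_X_mul]
    push_cast at this ⊢
    linear_combination z ^ (n + 2) * this

lemma binomSeries_mul_deriv (α x : ℝ) {z w : ℂ} (hs : z + w = 2 * x) (hp : z * w = 1) :
    (1 - C (2 * x : ℂ) * X + X * X) * d⁄dX ℂ (binomSeries α z * binomSeries α w)
      = (C (2 * α * x : ℂ) - C (2 * α : ℂ) * X) * (binomSeries α z * binomSeries α w) := by
  have h1 := binomSeries_deriv α z
  have h2 := binomSeries_deriv α w
  have hs' : (C z + C w : PowerSeries ℂ) = C (2 * x : ℂ) := by rw [← map_add, hs]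
  have hp' : (C z * C w : PowerSeries ℂ) = 1 := by rw [← map_mul, hp, map_one]
  have ha : (C (2 * α * x : ℂ) : PowerSeries ℂ) = C (α : ℂ) * C (2 * x : ℂ) := by
    rw [← map_mul]; congr 1; ring
  have hb : (C (2 * α : ℂ) : PowerSeries ℂ) = 2 * C (α : ℂ) := by
    rw [map_mul, map_ofNat]
  rw [map_mul] at h1 h2
  have hd : d⁄dX ℂ (binomSeries α z * binomSeries α w) =
      binomSeries α z * d⁄dX ℂ (binomSeries α w) + binomSeries α w * d⁄dX ℂ (binomSeries α z) := by
    rw [Derivation.leibniz]; simp [smul_eq_mul]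
  have hq : (1 - C (2 * x : ℂ) * X + X * X : PowerSeries ℂ) = (1 - C z * X) * (1 - C w * X) := by
    rw [← hs']; linear_combination (-X * X) * hp'
  rw [hq, hd, ha, hb, ← hs']
  linear_combination (1 - C w * X) * binomSeries α w * h1 + (1 - C z * X) * binomSeries α z * h2
    - 2 * C (α : ℂ) * X * binomSeries α z * binomSeries α w * hp'

/-- The generating function `∑ C_n(x) s^n = (1 - zs)^{-α} (1 - ws)^{-α}`, where `z, w` are the
reciprocal roots of `1 - 2xs + s²`. -/
lemma gegenbauer_eq_coeff (α x : ℝ) {z w : ℂ} (hs : z + w = 2 * x) (hp : z * w = 1) (n : ℕ) :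
    (gegenbauer α n x : ℂ) = coeff n (binomSeries α z * binomSeries α w) := by
  induction n using Nat.twoStepInduction with
  | zero => simp [gegenbauer, coeff_mul, binomSeries, risingFac]
  | one =>
    simp [gegenbauer, coeff_mul, binomSeries, risingFac, Nat.antidiagonal_succ]
    linear_combination (-α : ℂ) * hs
  | more n ih1 ih2 =>
    have h := congrArg (coeff (n + 1)) (binomSeries_mul_deriv α x hs hp)
    have hn : ((n : ℂ) + 2) ≠ 0 := by exact_mod_cast (by omega : n + 2 ≠ 0)
    simp only [add_mul, sub_mul, one_mul, mul_assoc] at h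
    simp only [map_add, map_sub, coeff_C_mul, coeff_succ_X_mul, coeff_derivative, ← ih2] at h
    have h0 : coeff n (X * d⁄dX ℂ (binomSeries α z * binomSeries α w)) =
        n * (gegenbauer α n x : ℂ) := by
      cases n with
      | zero => simp
      | succ m => rw [coeff_succ_X_mul, coeff_derivative, ← ih1]; push_cast; ring
    rw [h0, ← ih1] at h
    rw [gegenbauer]
    push_cast at h ⊢
    rw [div_eq_iff hn]
    linear_combination -h

lemma abs_gegenbauer_le {α : ℝ} (hα : 0 < α) {u : ℝ} (hu : u ∈ Set.Icc (-1 : ℝ) 1) (n : ℕ) :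
    |gegenbauer α n u| ≤ gegenbauer α n 1 := by
  have hsq : Real.sqrt (1 - u ^ 2) ^ 2 = 1 - u ^ 2 :=
    Real.sq_sqrt (by nlinarith [hu.1, hu.2])
  -- `z = u + iv` and `w = u - iv` are the points of the unit circle above and below `u`.
  set v := Real.sqrt (1 - u ^ 2)
  have hnorm : ∀ s : ℝ, s ^ 2 = 1 - u ^ 2 → ‖(⟨u, s⟩ : ℂ)‖ = 1 := by
    intro s h
    rw [Complex.norm_def, Complex.normSq_mk, Real.sqrt_eq_one]
    linarith
  have hz := hnorm v hsq
  have hw := hnorm (-v) (by rw [neg_sq]; exact hsq)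
  have h1 := gegenbauer_eq_coeff α u (z := ⟨u, v⟩) (w := ⟨u, -v⟩)
    (by apply Complex.ext <;> simp; ring)
    (by
      apply Complex.ext <;> simp
      · linear_combination hsq
      · ring) n
  have h2 := gegenbauer_eq_coeff α 1 (z := 1) (w := 1) (by norm_num) (by norm_num) n
  have h3 : gegenbauer α n 1 = ∑ p ∈ antidiagonal n,
      (risingFac α p.1 / p.1.factorial) * (risingFac α p.2 / p.2.factorial) := by
    rw [coeff_mul] at h2
    simp only [binomSeries, coeff_mk, one_pow, mul_one] at h2
    exact_mod_cast h2
  rw [← Real.norm_eq_abs, ← Complex.norm_real, h1, h3, coeff_mul]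
  refine (norm_sum_le _ _).trans (sum_le_sum fun p _ => le_of_eq ?_)
  have hpos : ∀ a : ℕ, 0 ≤ risingFac α a / a.factorial := fun a =>
    div_nonneg (risingFac_pos hα a).le (Nat.cast_nonneg _)
  simp only [binomSeries, coeff_mk, norm_mul, norm_pow, hz, hw, one_pow, mul_one,
    Complex.norm_real, Real.norm_of_nonneg (hpos _)]

/-! ### The identity `∑_k A_{k,i} C_k(1) = 1` -/

/-- The normalised coefficient `A_{k,i} / (α + k)`. -/
noncomputable def normCoef (α : ℝ) (k i : ℕ) : ℝ :=
  if k ≤ i ∧ k % 2 = i % 2 then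
    (Nat.factorial i : ℝ) /
      (2 ^ i * (Nat.factorial ((i - k) / 2) : ℝ) * risingFac α ((i + k) / 2 + 1))
  else 0

lemma normCoef_nonneg {α : ℝ} (hα : 0 < α) (k i : ℕ) : 0 ≤ normCoef α k i := by
  have := risingFac_pos hα ((i + k) / 2 + 1)
  unfold normCoef
  split_ifs <;> positivity

lemma Acoef_eq (d k i : ℕ) :
    Acoef d k i = ((k : ℝ) + ((d : ℝ) / 2 - 1)) * normCoef ((d : ℝ) / 2 - 1) k i := by
  unfold Acoef normCoef
  split_ifs
  · ring
  · simp

lemma normCoef_eq_zero (α : ℝ) {k i : ℕ} (h : i < k) : normCoef α k i = 0 :=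
  if_neg fun h' => absurd h'.1 (by omega)

/-- `normCoef` in the coordinates `i = 2j + k`. -/
lemma normCoef_add (α : ℝ) (j k : ℕ) : normCoef α k (2 * j + k) =
    ((2 * j + k).factorial : ℝ) / (2 ^ (2 * j + k) * (j.factorial : ℝ) *
      risingFac α (j + k + 1)) := by
  unfold normCoef
  rw [if_pos ⟨by omega, by omega⟩, show (2 * j + k - k) / 2 = j by omega,
    show (2 * j + k + k) / 2 = j + k by omega]

/-- Pascal-type recurrence for the coefficients.  For `k = 0` the index `k - 1` is truncated, but
its coefficient `k` vanishes. -/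
lemma normCoef_succ {α : ℝ} (hα : 0 < α) (k i : ℕ) :
    2 * ((k : ℝ) + α) * normCoef α k (i + 1) =
      k * normCoef α (k - 1) i + (k + 2 * α) * normCoef α (k + 1) i := by
  by_cases h : k ≤ i + 1 ∧ k % 2 = (i + 1) % 2
  · obtain ⟨j, hj⟩ : ∃ j, i + 1 = 2 * j + k := ⟨(i + 1 - k) / 2, by omega⟩
    rw [hj, normCoef_add]
    have hr := fun m => (risingFac_pos hα m).ne'
    have hpos : ∀ m : ℕ, α + m ≠ 0 := fun m => by positivity
    have hf := fun m : ℕ => (Nat.cast_ne_zero (R := ℝ)).2 m.factorial_ne_zero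
    rcases k with _ | k
    · obtain ⟨j, rfl⟩ : ∃ j', j = j' + 1 := ⟨j - 1, by omega⟩
      obtain rfl : i = 2 * j + (0 + 1) := by omega
      rw [normCoef_add, show 2 * (j + 1) + 0 = (2 * j + (0 + 1)) + 1 by ring,
        show j + (0 + 1) + 1 = j + 1 + 0 + 1 by ring,
        Nat.factorial_succ (2 * j + (0 + 1)), Nat.factorial_succ j, pow_succ]
      have := hr (j + 1 + 0 + 1)
      have := hf j
      have := hf (2 * j + (0 + 1))
      push_cast
      field_simp
      ring
    · obtain rfl : i = 2 * j + k := by omega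
      rw [Nat.add_sub_cancel, normCoef_add]
      rcases j with _ | j
      · rw [normCoef_eq_zero α (show 2 * 0 + k < k + 1 + 1 by omega),
          show 2 * 0 + (k + 1) = k + 1 by ring, show 2 * 0 + k = k by ring,
          risingFac, Nat.factorial_succ k, pow_succ]
        have := hr (k + 1)
        have := hpos (k + 1)
        have := hf k
        push_cast at *
        field_simp
        ring
      · rw [show 2 * (j + 1) + k = 2 * j + (k + 1 + 1) by ring, normCoef_add,
          show 2 * (j + 1) + (k + 1) = (2 * j + (k + 1 + 1)) + 1 by ring,
          show j + 1 + (k + 1) + 1 = (j + 1 + k + 1) + 1 by ring,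
          show j + (k + 1 + 1) + 1 = (j + 1 + k + 1) + 1 by ring, risingFac,
          Nat.factorial_succ (2 * j + (k + 1 + 1)), Nat.factorial_succ j, pow_succ]
        have := hr (j + 1 + k + 1)
        have := hpos (j + 1 + k + 1)
        have := hf j
        have := hf (2 * j + (k + 1 + 1))
        push_cast at *
        field_simp
        ring
  · have h1 : normCoef α k (i + 1) = 0 := if_neg h
    have h2 : normCoef α (k + 1) i = 0 := if_neg (by omega)
    rcases k with _ | k
    · simp [h1, h2]
    · have h3 : normCoef α k i = 0 := if_neg (by omega)
      simp [h1, h2, h3]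

/-- Summation by parts for the three-term recurrence at `x = 1`. -/
lemma sum_by_parts (α : ℝ) (b : ℕ → ℝ) (N : ℕ) :
    2 * ∑ k ∈ range (N + 1), ((k : ℝ) + α) * b k * gegenbauer α k 1 =
      ∑ k ∈ range (N + 1), (k * b (k - 1) + (k + 2 * α) * b (k + 1)) * gegenbauer α k 1
      + (N + 1) * b N * gegenbauer α (N + 1) 1 - (N + 2 * α) * b (N + 1) * gegenbauer α N 1 := by
  induction N with
  | zero => simp [gegenbauer]; ring
  | succ N ih =>
    rw [sum_range_succ, mul_add, ih, sum_range_succ _ (N + 1), Nat.add_sub_cancel]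
    have hg : ((N : ℝ) + 2) * gegenbauer α (N + 2) 1 =
        2 * ((N : ℝ) + 1 + α) * gegenbauer α (N + 1) 1 - (N + 2 * α) * gegenbauer α N 1 := by
      rw [gegenbauer]
      field_simp
    push_cast
    linear_combination -b (N + 1) * hg

lemma sum_normCoef {α : ℝ} (hα : 0 < α) (i : ℕ) :
    ∑ k ∈ range (i + 1), ((k : ℝ) + α) * normCoef α k i * gegenbauer α k 1 = 1 := by
  induction i with
  | zero => simp [normCoef, gegenbauer, risingFac, hα.ne']
  | succ i ih =>
    -- Cutting off at `i + 1` makes both boundary terms vanish, as `normCoef α k i = 0` for `k > i`.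
    have h := sum_by_parts α (fun k => normCoef α k i) (i + 1)
    rw [sum_range_succ, ih, normCoef_eq_zero α (show i < i + 1 by omega),
      normCoef_eq_zero α (show i < i + 1 + 1 by omega)] at h
    simp only [← normCoef_succ hα] at h
    have h' : ∑ k ∈ range (i + 1 + 1),
        2 * ((k : ℝ) + α) * normCoef α k (i + 1) * gegenbauer α k 1 =
        2 * ∑ k ∈ range (i + 1 + 1),
          ((k : ℝ) + α) * normCoef α k (i + 1) * gegenbauer α k 1 := by
      rw [mul_sum]
      exact sum_congr rfl fun _ _ => by ring
    rw [h'] at h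
    linarith

lemma sum_Acoef_mul_gegenbauer_one {d : ℕ} (hd : 3 ≤ d) (i : ℕ) :
    ∑ k ∈ range (i + 1), Acoef d k i * gegenbauer ((d : ℝ) / 2 - 1) k 1 = 1 := by
  have hd' : (3 : ℝ) ≤ d := by exact_mod_cast hd
  simp only [Acoef_eq]
  exact sum_normCoef (by linarith) i

/-! ### Summability -/

/-- The terms with a fixed `i`; they vanish for `k > i`, so the cutoff `N` is immaterial. -/
lemma sum_abs_Acoef_le {d : ℕ} (hd : 3 ≤ d) {u : ℝ} (hu : u ∈ Set.Icc (-1 : ℝ) 1) {i N : ℕ}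
    (hi : i < N) :
    ∑ k ∈ range N, |Acoef d k i * gegenbauer ((d : ℝ) / 2 - 1) k u| ≤ 1 := by
  have hd' : (3 : ℝ) ≤ d := by exact_mod_cast hd
  have hα : (0 : ℝ) < (d : ℝ) / 2 - 1 := by linarith
  rw [← sum_subset (range_subset_range.2 hi)]
  · refine (sum_le_sum fun k _ => ?_).trans_eq (sum_Acoef_mul_gegenbauer_one hd i)
    have hA : 0 ≤ Acoef d k i := by
      rw [Acoef_eq]
      exact mul_nonneg (by positivity) (normCoef_nonneg hα k i)
    rw [abs_mul, abs_of_nonneg hA]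
    exact mul_le_mul_of_nonneg_left (abs_gegenbauer_le hα hu k) hA
  · intro k _ hk
    rw [Acoef_eq, normCoef_eq_zero _ (by simpa using hk)]
    simp

lemma sum_choose {t : ℝ} {n N : ℕ} (hn : n < N) :
    ∑ i ∈ range N, (n.choose i : ℝ) * t ^ (2 * (n - i)) * (2 * t) ^ i = (t ^ 2 + 2 * t) ^ n := by
  rw [← sum_subset (range_subset_range.2 hn), add_comm (t ^ 2), add_pow]
  · exact sum_congr rfl fun i _ => by rw [pow_mul]; ring
  · intro i _ hi
    rw [Nat.choose_eq_zero_of_lt (by simpa using hi)]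
    simp

lemma sum_fiber_le {d : ℕ} (hd : 3 ≤ d) {u : ℝ} (hu : u ∈ Set.Icc (-1 : ℝ) 1) {t : ℝ}
    (ht : 0 ≤ t) (c : ℝ) {n N : ℕ} (hn : n < N) :
    ∑ i ∈ range N, ∑ k ∈ range N, |c * (n.choose i : ℝ) * t ^ (2 * (n - i)) * (-2 * t) ^ i *
        Acoef d k i * gegenbauer ((d : ℝ) / 2 - 1) k u| ≤ |c| * (t ^ 2 + 2 * t) ^ n := by
  rw [← sum_choose hn, mul_sum]
  refine sum_le_sum fun i hi => ?_
  have h : ∀ k, |c * (n.choose i : ℝ) * t ^ (2 * (n - i)) * (-2 * t) ^ i *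
        Acoef d k i * gegenbauer ((d : ℝ) / 2 - 1) k u| =
      |c| * ((n.choose i : ℝ) * t ^ (2 * (n - i)) * (2 * t) ^ i) *
        |Acoef d k i * gegenbauer ((d : ℝ) / 2 - 1) k u| := by
    intro k
    simp only [abs_mul, abs_pow, abs_neg, abs_of_nonneg ht, Nat.abs_cast, Nat.abs_ofNat]
    ring
  simp only [h]
  rw [← mul_sum]
  exact mul_le_of_le_one_right (by positivity) (sum_abs_Acoef_le hd hu (mem_range.1 hi))

/-- Absolute-summability estimate from the appendix proof of the paper's
Theorem 1: for `d ≥ 3`, `α = d/2 − 1`, `u ∈ [−1,1]`, `t ≥ 0` and coefficients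
`(c_n)` with `∑ |c_n| (t²+2t)ⁿ < ∞`, the family
`f(n,i,k) = c_n · C(n,i) · t^{2(n−i)} · (−2t)^i · A_{k,i} · C_k^{(α)}(u)`
indexed by `{(n,i,k) : k ≤ i ≤ n}` is absolutely summable, with
`∑ |f| ≤ ∑_{n} |c_n| (t²+2t)ⁿ`. -/
theorem multipole_triple_sum_abs_summable (d : ℕ) (hd : 3 ≤ d)
    (u : ℝ) (hu : u ∈ Set.Icc (-1 : ℝ) 1) (t : ℝ) (ht : 0 ≤ t)
    (c : ℕ → ℝ) (hc : Summable fun n => |c n| * (t ^ 2 + 2 * t) ^ n) :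
    Summable (fun x : {p : ℕ × ℕ × ℕ // p.2.2 ≤ p.2.1 ∧ p.2.1 ≤ p.1} =>
        |c x.1.1 * (Nat.choose x.1.1 x.1.2.1 : ℝ) * t ^ (2 * (x.1.1 - x.1.2.1)) *
          (-2 * t) ^ x.1.2.1 * Acoef d x.1.2.2 x.1.2.1 *
          gegenbauer ((d : ℝ) / 2 - 1) x.1.2.2 u|) ∧
      (∑' x : {p : ℕ × ℕ × ℕ // p.2.2 ≤ p.2.1 ∧ p.2.1 ≤ p.1},
        |c x.1.1 * (Nat.choose x.1.1 x.1.2.1 : ℝ) * t ^ (2 * (x.1.1 - x.1.2.1)) *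
          (-2 * t) ^ x.1.2.1 * Acoef d x.1.2.2 x.1.2.1 *
          gegenbauer ((d : ℝ) / 2 - 1) x.1.2.2 u|) ≤
        ∑' n : ℕ, |c n| * (t ^ 2 + 2 * t) ^ n := by
  set F : ℕ × ℕ × ℕ → ℝ := fun p => |c p.1 * (Nat.choose p.1 p.2.1 : ℝ) * t ^ (2 * (p.1 - p.2.1)) *
    (-2 * t) ^ p.2.1 * Acoef d p.2.2 p.2.1 * gegenbauer ((d : ℝ) / 2 - 1) p.2.2 u| with hF
  have hbound : ∀ s : Finset {p : ℕ × ℕ × ℕ // p.2.2 ≤ p.2.1 ∧ p.2.1 ≤ p.1},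
      ∑ x ∈ s, F x.1 ≤ ∑' n : ℕ, |c n| * (t ^ 2 + 2 * t) ^ n := by
    intro s
    set N := s.sup (fun x => x.1.1) + 1 with hN
    have hsub : s.map (Function.Embedding.subtype _) ⊆ range N ×ˢ range N ×ˢ range N := by
      intro p hp
      obtain ⟨x, hx, rfl⟩ := mem_map.1 hp
      have h := le_sup (f := fun x : {p : ℕ × ℕ × ℕ // p.2.2 ≤ p.2.1 ∧ p.2.1 ≤ p.1} => x.1.1) hx
      have hx' := x.2
      simp only [mem_product, mem_range, Function.Embedding.subtype_apply]
      omega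
    calc ∑ x ∈ s, F x.1 = ∑ p ∈ s.map (Function.Embedding.subtype _), F p := by
          rw [sum_map]; rfl
      _ ≤ ∑ p ∈ range N ×ˢ range N ×ˢ range N, F p :=
          sum_le_sum_of_subset_of_nonneg hsub fun _ _ _ => abs_nonneg _
      _ = ∑ n ∈ range N, ∑ i ∈ range N, ∑ k ∈ range N, F (n, i, k) := by
          simp only [sum_product]
      _ ≤ ∑ n ∈ range N, |c n| * (t ^ 2 + 2 * t) ^ n :=
          sum_le_sum fun n hn => sum_fiber_le hd hu ht (c n) (mem_range.1 hn)
      _ ≤ ∑' n : ℕ, |c n| * (t ^ 2 + 2 * t) ^ n :=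
          hc.sum_le_tsum _ fun n _ => by positivity
  exact ⟨summable_of_sum_le (fun _ => abs_nonneg _) hbound,
    Real.tsum_le_of_sum_le (fun _ => abs_nonneg _) hbound⟩
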